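/- Let 0 < a ≤ 2. Then lim_{N→∞} #{(r₁,r₂) ∈ {0,…,N−1}² : gcd(r₁,r₂,N) = 1 and there exists (x,y) ∈ ℤ² with (x,y) ≢ (0,0) (mod N), r₁x + r₂y ≡ 0 (mod N), |x| < √(aN)/2 and |y| < √(aN)/2} / #{(r₁,r₂) ∈ {0,…,N−1}² : gcd(r₁,r₂,N) = 1} = 3a/π². -/

import Mathlib

open Filter

/-- integer points of the open box of half-side `R` -/
noncomputable def sbox (R : ℝ) : Finset (ℤ × ℤ) :=
  Finset.Ioo (-⌈R⌉) ⌈R⌉ ×ˢ Finset.Ioo (-⌈R⌉) ⌈R⌉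

lemma mem_sbox (R : ℝ) (v : ℤ × ℤ) :
    v ∈ sbox R ↔ (|(v.1 : ℝ)| < R ∧ |(v.2 : ℝ)| < R) := by
  have key : ∀ x : ℤ, (-⌈R⌉ < x ∧ x < ⌈R⌉) ↔ |(x : ℝ)| < R := by
    intro x
    rw [abs_lt, Int.lt_ceil, neg_lt, Int.lt_ceil, Int.cast_neg, neg_lt]
  simp only [sbox, Finset.mem_product, Finset.mem_Ioo, key]

/-- primitive integer points of the box -/
noncomputable def prim (R : ℝ) : Finset (ℤ × ℤ) :=
  (sbox R).filter (fun v => Int.gcd v.1 v.2 = 1)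

lemma mem_prim (R : ℝ) (v : ℤ × ℤ) :
    v ∈ prim R ↔ (|(v.1 : ℝ)| < R ∧ |(v.2 : ℝ)| < R) ∧ Int.gcd v.1 v.2 = 1 := by
  simp [prim, mem_sbox]

noncomputable def bcount (R : ℝ) : ℝ := (((sbox R).erase 0).card : ℝ)

lemma bcount_eq {R : ℝ} (hR : 0 ≤ R) : bcount R = 4 * (⌈R⌉ : ℝ) * ((⌈R⌉ : ℝ) - 1) := by
  rcases hR.eq_or_lt with rfl | hR
  · simp [bcount, sbox]
  have hM : 0 < ⌈R⌉ := Int.ceil_pos.mpr hR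
  have h0 : (0 : ℤ × ℤ) ∈ sbox R := by
    rw [mem_sbox]; simpa using hR
  have hc : (((sbox R).card : ℕ) : ℤ) = (2 * ⌈R⌉ - 1) ^ 2 := by
    have : (((⌈R⌉ - -⌈R⌉ - 1).toNat : ℕ) : ℤ) = 2 * ⌈R⌉ - 1 := by
      rw [Int.toNat_of_nonneg (by omega)]; ring
    simp only [sbox, Finset.card_product, Int.card_Ioo]
    push_cast [this]
    ring
  have h1 : ((sbox R).erase 0).card + 1 = (sbox R).card := Finset.card_erase_add_one h0
  have h2 : (((sbox R).erase 0).card : ℝ) + 1 = (2 * (⌈R⌉ : ℝ) - 1) ^ 2 := by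
    have : ((((sbox R).erase 0).card + 1 : ℕ) : ℤ) = (2 * ⌈R⌉ - 1) ^ 2 := by rw [h1, hc]
    exact_mod_cast this
  unfold bcount
  linarith [h2]

lemma bcount_le {R : ℝ} (hR : 0 ≤ R) : bcount R ≤ 8 * R ^ 2 := by
  rw [bcount_eq hR]
  rcases le_or_gt R 1 with h | h
  · rcases hR.eq_or_lt with rfl | hR
    · simp
    have : ⌈R⌉ = 1 := by rw [Int.ceil_eq_iff]; simp [hR, h]
    rw [this]; simp; positivity
  · have h1 := Int.ceil_lt_add_one R
    have h2 := Int.le_ceil R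
    nlinarith

lemma bcount_nonneg (R : ℝ) : 0 ≤ bcount R := by unfold bcount; positivity

lemma card_dvd {R : ℝ} {g : ℕ} (hg : 0 < g) :
    (((((sbox R).erase 0).filter (fun v => g ∣ Int.gcd v.1 v.2)).card : ℕ) : ℝ) = bcount (R / g) := by
  unfold bcount
  norm_cast
  symm
  have hg' : (0 : ℝ) < g := by exact_mod_cast hg
  have hgz : (g : ℤ) ≠ 0 := by exact_mod_cast hg.ne'
  apply Finset.card_bij (fun v _ => ((g : ℤ) * v.1, (g : ℤ) * v.2))
  · rintro ⟨x, y⟩ h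
    simp only [Finset.mem_erase, mem_sbox, Finset.mem_filter, ne_eq, Prod.mk_eq_zero, lt_div_iff₀ hg'] at h ⊢
    refine ⟨⟨by simpa [hgz, hg.ne'] using h.1, ?_, ?_⟩, ?_⟩
    · push_cast; rw [abs_mul, Nat.abs_cast, mul_comm]; exact h.2.1
    · push_cast; rw [abs_mul, Nat.abs_cast, mul_comm]; exact h.2.2
    · rw [Int.gcd_mul_left]; simp
  · rintro ⟨x, y⟩ _ ⟨x', y'⟩ _ h
    simpa [hgz, hg.ne'] using h
  · rintro ⟨x, y⟩ h
    simp only [Finset.mem_erase, mem_sbox, Finset.mem_filter, ne_eq, Prod.mk_eq_zero] at h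
    obtain ⟨⟨h0, h1, h2⟩, h3⟩ := h
    have h4 := Int.dvd_coe_gcd_iff.mp (Int.natCast_dvd_natCast.mpr h3)
    obtain ⟨⟨x, rfl⟩, ⟨y, rfl⟩⟩ := h4
    refine ⟨(x, y), ?_, rfl⟩
    simp only [Finset.mem_erase, mem_sbox, ne_eq, Prod.mk_eq_zero, lt_div_iff₀ hg']
    push_cast at h1 h2
    rw [abs_mul, Nat.abs_cast, mul_comm] at h1 h2
    exact ⟨fun h => h0 (by simp [h.1, h.2]), h1, h2⟩

lemma moebius_ind (n : ℕ) :
    ∑ g ∈ n.divisors, (ArithmeticFunction.moebius g : ℝ) = if n = 1 then 1 else 0 := by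
  have h := congrArg (fun f => f n) ArithmeticFunction.moebius_mul_coe_zeta
  simp only [ArithmeticFunction.coe_mul_zeta_apply, ArithmeticFunction.one_apply] at h
  exact_mod_cast h

lemma prim_eq_tsum {R : ℝ} (hR : 0 < R) :
    ((prim R).card : ℝ) = ∑' g : ℕ, (ArithmeticFunction.moebius g : ℝ) * bcount (R / g) := by
  have hz : ∀ g ∉ Finset.range ⌈R⌉.toNat, (ArithmeticFunction.moebius g : ℝ) * bcount (R / g) = 0 := by
    intro g hg
    have hg1 : ⌈R⌉ ≤ g := by simpa using hg
    have hg2 : R ≤ g := Int.ceil_le.mp hg1 |>.trans (by simp)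
    have hg' : (0 : ℝ) < g := hR.trans_le hg2
    have : ⌈R / g⌉ = 1 := by
      rw [Int.ceil_eq_iff]; constructor
      · simp; positivity
      · simpa using (div_le_one hg').mpr hg2
    rw [bcount_eq (by positivity), this]; simp
  rw [tsum_eq_sum hz]
  have h1 : ∀ g ∈ Finset.range ⌈R⌉.toNat, (ArithmeticFunction.moebius g : ℝ) * bcount (R / g) =
      ∑ v ∈ (sbox R).erase 0, if g ∣ Int.gcd v.1 v.2 then (ArithmeticFunction.moebius g : ℝ) else 0 := by
    intro g _
    rcases Nat.eq_zero_or_pos g with rfl | hg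
    · simp
    rw [← card_dvd hg, ← Finset.sum_filter, Finset.sum_const, nsmul_eq_mul, mul_comm]
  rw [Finset.sum_congr rfl h1, Finset.sum_comm]
  have h2 : ∀ v ∈ (sbox R).erase 0, (∑ g ∈ Finset.range ⌈R⌉.toNat,
      if g ∣ Int.gcd v.1 v.2 then (ArithmeticFunction.moebius g : ℝ) else 0) =
      if Int.gcd v.1 v.2 = 1 then 1 else 0 := by
    rintro ⟨x, y⟩ hv
    simp only [Finset.mem_erase, ne_eq, Prod.mk_eq_zero, sbox, Finset.mem_product, Finset.mem_Ioo] at hv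
    have hne : Int.gcd x y ≠ 0 := by
      rw [Ne, Int.gcd_eq_zero_iff]; exact hv.1
    rw [← moebius_ind _, ← Finset.sum_filter]
    apply Finset.sum_congr _ (fun _ _ => rfl)
    ext g
    simp only [Finset.mem_filter, Finset.mem_range, Nat.mem_divisors]
    refine ⟨fun h => ⟨h.2, hne⟩, fun h => ⟨?_, h.1⟩⟩
    have hgx := Int.natCast_dvd.mp ((Int.dvd_coe_gcd_iff.mp (Int.natCast_dvd_natCast.mpr h.1)).1)
    have hgy := Int.natCast_dvd.mp ((Int.dvd_coe_gcd_iff.mp (Int.natCast_dvd_natCast.mpr h.1)).2)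
    by_cases hx : x = 0
    · have hy : y ≠ 0 := fun hy => hv.1 ⟨hx, hy⟩
      have := Nat.le_of_dvd (by omega) hgy
      omega
    · have := Nat.le_of_dvd (by omega) hgx
      omega
  rw [Finset.sum_congr rfl h2, ← Finset.sum_filter, Finset.sum_const, nsmul_eq_mul, mul_one]
  congr 2
  ext v
  simp only [prim, Finset.mem_filter, Finset.mem_erase]
  refine ⟨fun h => ⟨⟨?_, h.1⟩, h.2⟩, fun h => ⟨h.1.2, h.2⟩⟩
  rintro rfl
  simp at h

lemma moebius_tsum : ∑' g : ℕ, (ArithmeticFunction.moebius g : ℝ) * (4 * (1 / (g : ℝ)) ^ 2) =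
    4 * (6 / Real.pi ^ 2) := by
  have h := ArithmeticFunction.LSeries_zeta_mul_Lseries_moebius (s := 2) (by norm_num)
  rw [ArithmeticFunction.LSeries_zeta_eq_riemannZeta (by norm_num), riemannZeta_two] at h
  have h2 : LSeries (fun n => ((ArithmeticFunction.moebius n : ℤ) : ℂ)) 2 =
      ((∑' g : ℕ, (ArithmeticFunction.moebius g : ℝ) * (1 / (g : ℝ)) ^ 2 : ℝ) : ℂ) := by
    rw [LSeries, Complex.ofReal_tsum]
    congr 1
    ext n
    rw [LSeries.term_def]
    split_ifs with hn
    · simp [hn]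
    · push_cast
      rw [show (2:ℂ) = ((2:ℕ):ℂ) by norm_num, Complex.cpow_natCast]
      ring
  rw [h2] at h
  have h3 : (Real.pi ^ 2 / 6) * (∑' g : ℕ, (ArithmeticFunction.moebius g : ℝ) * (1 / (g : ℝ)) ^ 2) = 1 := by
    exact_mod_cast h
  have h4 : (∑' g : ℕ, (ArithmeticFunction.moebius g : ℝ) * (1 / (g : ℝ)) ^ 2) = 6 / Real.pi ^ 2 := by
    have := Real.pi_pos
    field_simp at h3 ⊢
    linarith
  rw [← h4, ← tsum_mul_left]
  congr 1; ext g; ring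

lemma bcount_tendsto {c : ℝ} (hc : 0 ≤ c) :
    Tendsto (fun R : ℝ => bcount (R * c) / R ^ 2) atTop (nhds (4 * c ^ 2)) := by
  rcases hc.eq_or_lt with rfl | hc
  · simp [bcount_eq]
  have h1 : Tendsto (fun R : ℝ => ((⌈c * R⌉ : ℤ) : ℝ) / R) atTop (nhds c) :=
    (tendsto_nat_ceil_mul_div_atTop hc.le).congr' (by
      filter_upwards [eventually_gt_atTop 0] with R hR
      rw [natCast_ceil_eq_intCast_ceil (by positivity)])
  have h2 : Tendsto (fun R : ℝ => (R : ℝ)⁻¹) atTop (nhds 0) := tendsto_inv_atTop_zero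
  have h3 := (h1.const_mul 4).mul (h1.sub h2)
  rw [show 4 * c * (c - 0) = 4 * c ^ 2 by ring] at h3
  refine h3.congr' ?_
  filter_upwards [eventually_gt_atTop 0] with R hR
  rw [bcount_eq (by positivity), mul_comm R c]
  field_simp

lemma prim_tendsto :
    Tendsto (fun R : ℝ => ((prim R).card : ℝ) / (4 * R ^ 2)) atTop (nhds (6 / Real.pi ^ 2)) := by
  have hs : Summable (fun g : ℕ => 8 * (1 / (g : ℝ) ^ 2)) :=
    (Real.summable_one_div_nat_pow.mpr (by norm_num)).mul_left 8
  have h := tendsto_tsum_of_dominated_convergence (𝓕 := atTop)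
    (f := fun (R : ℝ) (g : ℕ) => (ArithmeticFunction.moebius g : ℝ) * (bcount (R * (1 / g)) / R ^ 2))
    (g := fun g : ℕ => (ArithmeticFunction.moebius g : ℝ) * (4 * (1 / (g : ℝ)) ^ 2)) hs
    (fun g => (bcount_tendsto (by positivity)).const_mul _) (by
      filter_upwards [eventually_gt_atTop 0] with R hR
      intro g
      have hμ : |(ArithmeticFunction.moebius g : ℝ)| ≤ 1 := by
        exact_mod_cast ArithmeticFunction.abs_moebius_le_one (n := g)
      have hb := bcount_le (R := R * (1 / g)) (by positivity)
      rw [Real.norm_eq_abs, abs_mul, abs_of_nonneg (div_nonneg (bcount_nonneg _) (by positivity))]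
      calc _ ≤ 1 * (bcount (R * (1 / g)) / R ^ 2) :=
            mul_le_mul_of_nonneg_right hμ (div_nonneg (bcount_nonneg _) (by positivity))
        _ ≤ 1 * (8 * (R * (1 / g)) ^ 2 / R ^ 2) := by gcongr
        _ = 8 * (1 / (g : ℝ) ^ 2) := by field_simp)
  rw [moebius_tsum] at h
  have h5 := h.div_const 4
  rw [show 4 * (6 / Real.pi ^ 2) / 4 = 6 / Real.pi ^ 2 by ring] at h5
  refine h5.congr' ?_
  filter_upwards [eventually_gt_atTop 0] with R hR
  rw [prim_eq_tsum hR]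
  have : ∀ g : ℕ, (ArithmeticFunction.moebius g : ℝ) * (bcount (R * (1 / g)) / R ^ 2) =
     ((ArithmeticFunction.moebius g : ℝ) * bcount (R / g)) / R ^ 2 := by
    intro g; rw [mul_one_div]; ring
  simp_rw [this]
  rw [tsum_div_const]
  field_simp

lemma prim_le {R : ℝ} (hR : 0 ≤ R) : ((prim R).card : ℝ) ≤ 8 * R ^ 2 := by
  refine le_trans ?_ (bcount_le hR)
  unfold bcount
  norm_cast
  apply Finset.card_le_card
  intro v hv
  simp only [prim, Finset.mem_filter] at hv
  rw [Finset.mem_erase]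
  refine ⟨?_, hv.1⟩
  rintro rfl
  simp at hv

lemma succ_cube_le (a : ℕ) : (a + 1) ^ 3 ≤ 8 * 2 ^ a := by
  induction a with
  | zero => norm_num
  | succ k ih =>
    rcases Nat.lt_or_ge k 4 with h | h
    · interval_cases k <;> norm_num
    · rw [pow_succ 2]
      nlinarith [Nat.mul_le_mul h h, Nat.mul_le_mul (Nat.mul_le_mul h h) h, Nat.mul_le_mul (Nat.mul_le_mul (le_refl k) h) h, Nat.mul_le_mul (Nat.mul_le_mul (le_refl k) (le_refl k)) h]

lemma tau_cube_le (n : ℕ) (hn : n ≠ 0) : n.divisors.card ^ 3 ≤ 8 ^ 8 * n := by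
  rw [Nat.card_divisors hn, ← Finset.prod_pow]
  have hstep : ∀ p ∈ n.primeFactors, (n.factorization p + 1) ^ 3 ≤
      (if p < 8 then 8 else 1) * p ^ n.factorization p := by
    intro p hp
    have hp2 := (Nat.prime_of_mem_primeFactors hp).two_le
    split_ifs with h
    · exact (succ_cube_le _).trans (Nat.mul_le_mul_left _ (Nat.pow_le_pow_left hp2 _))
    · rw [one_mul]
      calc (n.factorization p + 1) ^ 3 ≤ (2 ^ n.factorization p) ^ 3 :=
            Nat.pow_le_pow_left (Nat.lt_two_pow_self) 3
        _ = 8 ^ n.factorization p := by rw [← pow_mul, mul_comm, pow_mul]; norm_num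
        _ ≤ _ := Nat.pow_le_pow_left (by omega) _
  refine (Finset.prod_le_prod' hstep).trans ?_
  rw [Finset.prod_mul_distrib]
  have h1 : ∏ p ∈ n.primeFactors, p ^ n.factorization p = n := Nat.prod_factorization_pow_eq_self hn
  rw [h1]
  apply Nat.mul_le_mul_right
  rw [Finset.prod_ite, Finset.prod_const, Finset.prod_const_one, mul_one]
  apply Nat.pow_le_pow_right (by norm_num)
  calc _ ≤ (Finset.range 8).card := Finset.card_le_card (by intro p; simp)
    _ = 8 := by simp

lemma tau_tendsto : Tendsto (fun N : ℕ => (N.divisors.card : ℝ) / Real.sqrt N) atTop (nhds 0) := by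
  have h1 : Tendsto (fun N : ℕ => ((8:ℝ) ^ 8) ^ ((1:ℝ)/3) * (N : ℝ) ^ (-(1/6 : ℝ))) atTop (nhds 0) := by
    have := ((tendsto_rpow_neg_atTop (y := 1/6) (by norm_num)).comp tendsto_natCast_atTop_atTop).const_mul (((8:ℝ) ^ 8) ^ ((1:ℝ)/3))
    simpa using this
  refine squeeze_zero' (Eventually.of_forall fun N => by positivity) ?_ h1
  filter_upwards [eventually_gt_atTop 0] with N hN
  have hN' : (0 : ℝ) < N := by exact_mod_cast hN
  have h2 : (N.divisors.card : ℝ) ^ 3 ≤ 8 ^ 8 * N := by exact_mod_cast tau_cube_le N hN.ne'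
  have h3 : (N.divisors.card : ℝ) ≤ (8 ^ 8 * N : ℝ) ^ ((1:ℝ)/3) := by
    have := Real.rpow_le_rpow (by positivity) h2 (z := (1:ℝ)/3) (by norm_num)
    rwa [← Real.rpow_natCast, ← Real.rpow_mul (by positivity), show ((3:ℕ):ℝ) * (1/3) = 1 by norm_num, Real.rpow_one] at this
  rw [div_le_iff₀ (by positivity), Real.sqrt_eq_rpow, mul_assoc, ← Real.rpow_add hN', show (-(1/6 : ℝ)) + 1/2 = 1/3 by norm_num, ← Real.mul_rpow (by positivity) (by positivity)]
  exact h3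

lemma gcd_iff (N a b : ℕ) :
    Nat.gcd (Nat.gcd a b) N = 1 ↔ IsCoprime (a : ZMod N) (b : ZMod N) := by
  change Nat.Coprime (Nat.gcd a b) N ↔ _
  rw [← ZMod.isUnit_iff_coprime]
  constructor
  · intro h
    obtain ⟨e, he⟩ := h.exists_right_inv
    have h1 := congrArg (fun z : ℤ => (z : ZMod N)) (Nat.gcd_eq_gcd_ab a b)
    push_cast at h1
    refine ⟨e * (Nat.gcdA a b : ZMod N), e * (Nat.gcdB a b : ZMod N), ?_⟩
    rw [← he, h1]; ring
  · rintro ⟨u, w, h⟩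
    apply isUnit_of_dvd_one
    rw [← h]
    apply dvd_add
    · exact Dvd.dvd.mul_left (by exact_mod_cast (Nat.cast_dvd_cast (Nat.gcd_dvd_left a b))) _
    · exact Dvd.dvd.mul_left (by exact_mod_cast (Nat.cast_dvd_cast (Nat.gcd_dvd_right a b))) _

lemma transfer (N : ℕ) [NeZero N] (Q : ZMod N × ZMod N → Prop) [DecidablePred Q] :
    ((Finset.range N ×ˢ Finset.range N).filter (fun p : ℕ × ℕ => Q ((p.1 : ZMod N), (p.2 : ZMod N)))).card
      = (Finset.univ.filter Q).card := by
  apply Finset.card_bij (fun p _ => ((p.1 : ZMod N), (p.2 : ZMod N)))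
  · intro p hp
    simp only [Finset.mem_filter, Finset.mem_univ, true_and] at hp ⊢
    exact hp.2
  · rintro ⟨x, y⟩ h ⟨x', y'⟩ h' he
    simp only [Finset.mem_filter, Finset.mem_product, Finset.mem_range] at h h'
    simp only [Prod.mk.injEq, ZMod.natCast_eq_natCast_iff'] at he
    rw [Nat.mod_eq_of_lt h.1.1, Nat.mod_eq_of_lt h.1.2, Nat.mod_eq_of_lt h'.1.1, Nat.mod_eq_of_lt h'.1.2] at he
    exact Prod.ext he.1 he.2
  · rintro ⟨x, y⟩ h
    refine ⟨(x.val, y.val), ?_, by simp⟩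
    simp only [Finset.mem_filter, Finset.mem_product, Finset.mem_range]
    simp only [Finset.mem_filter] at h
    exact ⟨⟨ZMod.val_lt x, ZMod.val_lt y⟩, by simpa using h.2⟩

lemma transfer_set (N : ℕ) [NeZero N] (Q : ZMod N × ZMod N → Prop) [DecidablePred Q] (S : Set (ℕ × ℕ))
    (hS : ∀ p, p ∈ S ↔ p.1 < N ∧ p.2 < N ∧ Q ((p.1 : ZMod N), (p.2 : ZMod N))) :
    S.ncard = (Finset.univ.filter Q).card := by
  rw [← transfer, ← Set.ncard_coe_finset]
  congr 1
  ext p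
  simp [hS, and_assoc]

open Classical in
/-- coprime pairs mod `N` -/
noncomputable def GZ (N : ℕ) [NeZero N] : Finset (ZMod N × ZMod N) :=
  Finset.univ.filter (fun r => IsCoprime r.1 r.2)

open Classical in
noncomputable def cc (N : ℕ) [NeZero N] (d : ℕ) : ℕ :=
  ((GZ N).filter (fun r => addOrderOf r.1 = d)).card

lemma count_coprime (d m : ℕ) : ((Finset.range (d * m)).filter (fun t => Nat.Coprime m t)).card = d * m.totient := by
  induction d with
  | zero => simp
  | succ k ih =>
    have h := Nat.filter_coprime_Ico_eq_totient m (k * m)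
    rw [Finset.range_eq_Ico] at ih ⊢
    have hd : Finset.Ico 0 ((k+1) * m) = Finset.Ico 0 (k * m) ∪ Finset.Ico (k * m) (k * m + m) := by
      rw [Finset.Ico_union_Ico_eq_Ico (by positivity) (by omega)]
      congr 1; ring
    rw [hd, Finset.filter_union, Finset.card_union_of_disjoint, ih, h]
    · ring
    · apply Finset.disjoint_filter_filter
      exact Finset.Ico_disjoint_Ico_consecutive _ _ _

lemma cc_eq (N : ℕ) [NeZero N] (d : ℕ) (hd : d ∣ N) :
    cc N d = d.totient * (d * (N / d).totient) := by
  classical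
  have hN : 0 < N := Nat.pos_of_ne_zero (NeZero.ne N)
  have hd0 : 0 < d := Nat.pos_of_dvd_of_pos hd hN
  have h1 : cc N d = (Finset.univ.filter (fun r : ZMod N × ZMod N => IsCoprime r.1 r.2 ∧ addOrderOf r.1 = d)).card := by
    unfold cc GZ
    rw [Finset.filter_filter]
  rw [h1, ← transfer]
  have h2 : (Finset.range N ×ˢ Finset.range N).filter (fun p : ℕ × ℕ =>
      IsCoprime (p.1 : ZMod N) (p.2 : ZMod N) ∧ addOrderOf (p.1 : ZMod N) = d) =
      ((Finset.range N).filter (fun s => N.gcd s = N / d)) ×ˢ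
      ((Finset.range N).filter (fun t => Nat.Coprime (N / d) t)) := by
    ext ⟨s, t⟩
    simp only [Finset.mem_filter, Finset.mem_product, Finset.mem_range]
    rw [← gcd_iff, ZMod.addOrderOf_coe _ hN.ne']
    have e1 : N / N.gcd s = d ↔ N.gcd s = N / d := by
      have hg := Nat.gcd_dvd_left N s
      constructor
      · intro h; rw [← h, Nat.div_div_self hg hN.ne']
      · intro h; rw [h, Nat.div_div_self hd hN.ne']
    have e2 : (s.gcd t).gcd N = (N.gcd s).gcd t := by
      rw [Nat.gcd_comm, ← Nat.gcd_assoc]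
    rw [e1, e2]
    constructor
    · rintro ⟨⟨h1, h2⟩, h3, h4⟩
      rw [h4] at h3
      exact ⟨⟨h1, h4⟩, h2, h3⟩
    · rintro ⟨⟨h1, h4⟩, h2, h3⟩
      refine ⟨⟨h1, h2⟩, ?_, h4⟩
      rw [h4]; exact h3
  rw [h2, Finset.card_product, ← Nat.totient_div_of_dvd (Nat.div_dvd_of_dvd hd), Nat.div_div_self hd hN.ne']
  have h3 := count_coprime d (N / d)
  rw [Nat.mul_div_cancel' hd] at h3
  rw [h3]

lemma cc_symm (N : ℕ) [NeZero N] (d : ℕ) (hd : d ∣ N) :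
    N * cc N d = d ^ 2 * cc N (N / d) := by
  have hN : 0 < N := Nat.pos_of_ne_zero (NeZero.ne N)
  rw [cc_eq N d hd, cc_eq N _ (Nat.div_dvd_of_dvd hd), Nat.div_div_self hd hN.ne']
  obtain ⟨e, he⟩ := hd
  have hd0 : 0 < d := by rcases Nat.eq_zero_or_pos d with h | h; · simp [h] at he; omega
                         · exact h
  have : N / d = e := by rw [he]; exact Nat.mul_div_cancel_left e hd0
  rw [this, he]; ring

lemma cc_le (N : ℕ) [NeZero N] (d : ℕ) (hd : d ∣ N) : d * cc N (N / d) ≤ N ^ 2 := by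
  have hN : 0 < N := Nat.pos_of_ne_zero (NeZero.ne N)
  rw [cc_eq N _ (Nat.div_dvd_of_dvd hd), Nat.div_div_self hd hN.ne']
  calc d * ((N / d).totient * (N / d * d.totient)) ≤ d * ((N / d) * (N / d * d)) := by
        gcongr <;> exact Nat.totient_le _
    _ = (d * (N / d)) ^ 2 := by ring
    _ = N ^ 2 := by rw [Nat.mul_div_cancel' hd]

lemma cc_sum (N : ℕ) [NeZero N] : ∑ d ∈ N.divisors, cc N d = (GZ N).card := by
  classical
  symm
  apply Finset.card_eq_sum_card_fiberwise (f := fun r : ZMod N × ZMod N => addOrderOf r.1)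
  intro r _
  simp only [Finset.mem_coe, Nat.mem_divisors]
  refine ⟨?_, NeZero.ne N⟩
  have := addOrderOf_dvd_card (x := r.1)
  rwa [ZMod.card] at this

lemma sum_inv_sq (n : ℕ) : ∑ g ∈ Finset.Icc 2 (n + 2), (1 : ℝ) / (g : ℝ) ^ 2 ≤ 3 / 4 - 1 / ((n : ℝ) + 2) := by
  induction n with
  | zero => norm_num
  | succ k ih =>
    rw [show k + 1 + 2 = (k + 2) + 1 by ring, Finset.sum_Icc_succ_top (by omega)]
    have : (1 : ℝ) / (((k + 2 + 1 : ℕ) : ℝ)) ^ 2 ≤ 1 / ((k : ℝ) + 2) - 1 / (((k + 1 : ℕ) : ℝ) + 2) := by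
      push_cast
      rw [div_sub_div _ _ (by positivity) (by positivity), div_le_div_iff₀ (by positivity) (by positivity)]
      nlinarith [(Nat.cast_nonneg k : (0:ℝ) ≤ k)]
    linarith

lemma sum_inv_sq' (n : ℕ) : ∑ g ∈ Finset.Icc 2 n, (1 : ℝ) / (g : ℝ) ^ 2 ≤ 3 / 4 := by
  rcases Nat.lt_or_ge n 2 with h | h
  · rw [Finset.Icc_eq_empty (by omega)]; norm_num
  · obtain ⟨k, rfl⟩ := Nat.exists_eq_add_of_le' h
    refine (sum_inv_sq k).trans ?_
    have : (0 : ℝ) ≤ 1 / ((k : ℝ) + 2) := by positivity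
    linarith

lemma card_mult (N g : ℕ) (hg : 0 < g) (hd : g ∣ N) :
    ((Finset.range N).filter (fun t => g ∣ t)).card ≤ N / g := by
  calc _ ≤ ((Finset.range (N / g)).image (fun t => g * t)).card := by
        apply Finset.card_le_card
        intro t
        simp only [Finset.mem_filter, Finset.mem_range, Finset.mem_image]
        rintro ⟨h1, ⟨e, rfl⟩⟩
        refine ⟨e, ?_, rfl⟩
        obtain ⟨m, rfl⟩ := hd
        rw [Nat.mul_div_cancel_left _ hg]
        exact Nat.lt_of_mul_lt_mul_left h1
    _ ≤ _ := Finset.card_image_le.trans (by simp)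

lemma GZ_lower (N : ℕ) [NeZero N] : (N : ℝ) ^ 2 / 4 ≤ ((GZ N).card : ℝ) := by
  classical
  have hN : 0 < N := Nat.pos_of_ne_zero (NeZero.ne N)
  have h1 : (GZ N).card = ((Finset.range N ×ˢ Finset.range N).filter
      (fun p : ℕ × ℕ => Nat.gcd (Nat.gcd p.1 p.2) N = 1)).card := by
    unfold GZ
    rw [← transfer]
    simp_rw [gcd_iff]
  set D := (Finset.Icc 2 N).filter (fun g => g ∣ N) with hD
  have hsub : Finset.range N ×ˢ Finset.range N ⊆ ((Finset.range N ×ˢ Finset.range N).filter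
      (fun p : ℕ × ℕ => Nat.gcd (Nat.gcd p.1 p.2) N = 1)) ∪
      D.biUnion (fun g => ((Finset.range N).filter (fun t => g ∣ t)) ×ˢ ((Finset.range N).filter (fun t => g ∣ t))) := by
    rintro ⟨s, t⟩ h
    simp only [Finset.mem_product, Finset.mem_range] at h
    simp only [hD, Finset.mem_union, Finset.mem_filter, Finset.mem_product, Finset.mem_range, Finset.mem_biUnion, Finset.mem_Icc]
    by_cases hg : (s.gcd t).gcd N = 1
    · left; exact ⟨h, hg⟩
    · right
      have hdN := Nat.gcd_dvd_right (s.gcd t) N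
      have hds := (Nat.gcd_dvd_left (s.gcd t) N).trans (Nat.gcd_dvd_left s t)
      have hdt := (Nat.gcd_dvd_left (s.gcd t) N).trans (Nat.gcd_dvd_right s t)
      have hle := Nat.le_of_dvd hN hdN
      have hpos := Nat.pos_of_dvd_of_pos hdN hN
      exact ⟨_, ⟨⟨by omega, hle⟩, hdN⟩, ⟨h.1, hds⟩, h.2, hdt⟩
  have h2 := (Finset.card_le_card hsub).trans (Finset.card_union_le _ _)
  rw [← h1, Finset.card_product, Finset.card_range] at h2
  have h3 : ((D.biUnion (fun g => ((Finset.range N).filter (fun t => g ∣ t)) ×ˢ ((Finset.range N).filter (fun t => g ∣ t)))).card : ℝ)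
      ≤ ∑ g ∈ Finset.Icc 2 N, (N : ℝ) ^ 2 * (1 / (g : ℝ) ^ 2) := by
    calc _ ≤ ((∑ g ∈ D, (((Finset.range N).filter (fun t => g ∣ t)) ×ˢ ((Finset.range N).filter (fun t => g ∣ t))).card : ℕ) : ℝ) := by
          exact_mod_cast Finset.card_biUnion_le
      _ ≤ ∑ g ∈ D, (N : ℝ) ^ 2 * (1 / (g : ℝ) ^ 2) := by
          push_cast
          apply Finset.sum_le_sum
          intro g hg
          simp only [hD, Finset.mem_filter, Finset.mem_Icc] at hg
          have hm := card_mult N g (by omega) hg.2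
          have hm2 : ((((Finset.range N).filter (fun t => g ∣ t)).card : ℕ) : ℝ) ≤ (N : ℝ) / g := by
            rw [← Nat.cast_div hg.2 (by norm_cast; omega)]
            exact_mod_cast hm
          rw [Finset.card_product, Nat.cast_mul]
          calc _ ≤ ((N : ℝ) / g) * ((N : ℝ) / g) := by gcongr
            _ = _ := by ring
      _ ≤ _ := by
          apply Finset.sum_le_sum_of_subset_of_nonneg (Finset.filter_subset _ _)
          intros; positivity
  rw [← Finset.mul_sum] at h3
  have h4 := sum_inv_sq' N
  have h5 : (N : ℝ) * N ≤ (GZ N).card + ((D.biUnion (fun g => ((Finset.range N).filter (fun t => g ∣ t)) ×ˢ ((Finset.range N).filter (fun t => g ∣ t)))).card : ℝ) := by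
    exact_mod_cast h2
  nlinarith [sq_nonneg (N : ℝ)]

lemma mem_GZ (N : ℕ) [NeZero N] (r : ZMod N × ZMod N) : r ∈ GZ N ↔ IsCoprime r.1 r.2 := by
  simp [GZ]

/-- value of the linear form -/
def dot (N : ℕ) (r : ZMod N × ZMod N) (v : ℤ × ℤ) : ZMod N := r.1 * (v.1 : ZMod N) + r.2 * (v.2 : ZMod N)

lemma card_dot (N : ℕ) [NeZero N] (d : ℕ) (v : ℤ × ℤ) (hv : Int.gcd v.1 v.2 = 1) :
    ((GZ N).filter (fun r => addOrderOf (dot N r v) = d)).card = cc N d := by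
  classical
  obtain ⟨x, y⟩ := v
  obtain ⟨u, w, h⟩ := Int.isCoprime_iff_gcd_eq_one.mpr hv
  have h' : (u : ZMod N) * x + w * y = 1 := by exact_mod_cast congrArg (fun z : ℤ => (z : ZMod N)) h
  unfold cc
  apply Finset.card_bij' (fun r _ => (r.1 * (x : ZMod N) + r.2 * (y : ZMod N), -(w : ZMod N) * r.1 + (u : ZMod N) * r.2))
    (fun s _ => ((u : ZMod N) * s.1 - (y : ZMod N) * s.2, (w : ZMod N) * s.1 + (x : ZMod N) * s.2))
  · rintro ⟨r1, r2⟩ hr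
    rw [Finset.mem_filter, mem_GZ] at hr ⊢
    simp only [dot] at hr ⊢
    refine ⟨?_, hr.2⟩
    obtain ⟨α, β, hc⟩ := hr.1
    exact ⟨α * u + β * w, β * x - α * y, by linear_combination (α * r1 + β * r2) * h' + hc⟩
  · rintro ⟨s, t⟩ hr
    rw [Finset.mem_filter, mem_GZ] at hr ⊢
    simp only [dot] at hr ⊢
    constructor
    · obtain ⟨α, β, hc⟩ := hr.1
      exact ⟨α * x - β * w, α * y + β * u, by linear_combination (α * s + β * t) * h' + hc⟩
    · rw [← hr.2]
      congr 1
      linear_combination s * h'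
  · rintro ⟨r1, r2⟩ _
    simp only [Prod.mk.injEq]
    constructor
    · linear_combination r1 * h'
    · linear_combination r2 * h'
  · rintro ⟨s, t⟩ _
    simp only [Prod.mk.injEq]
    constructor
    · linear_combination s * h'
    · linear_combination t * h'

lemma det_zero (N : ℕ) (r : ZMod N × ZMod N) (hr : IsCoprime r.1 r.2) (v w : ℤ × ℤ)
    (hv : dot N r v = 0) (hw : dot N r w = 0) (ρ : ℝ) (hρ : 2 * ρ ^ 2 ≤ N)
    (hv1 : |(v.1 : ℝ)| < ρ) (hv2 : |(v.2 : ℝ)| < ρ) (hw1 : |(w.1 : ℝ)| < ρ) (hw2 : |(w.2 : ℝ)| < ρ) :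
    v.1 * w.2 - v.2 * w.1 = 0 := by
  obtain ⟨α, β, h⟩ := hr
  unfold dot at hv hw
  have h1 : ((v.1 * w.2 - v.2 * w.1 : ℤ) : ZMod N) = 0 := by
    push_cast
    linear_combination (-((v.1 : ZMod N) * w.2 - v.2 * w.1)) * h + (α * w.2 - β * w.1) * hv + (- α * v.2 + β * v.1) * hw
  rw [ZMod.intCast_zmod_eq_zero_iff_dvd] at h1
  apply Int.eq_zero_of_abs_lt_dvd h1
  have h2 : |((v.1 : ℝ) * w.2 - v.2 * w.1)| < N := by
    calc |((v.1 : ℝ) * w.2 - v.2 * w.1)| ≤ |(v.1 : ℝ) * w.2| + |(v.2 : ℝ) * w.1| := abs_sub _ _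
      _ = |(v.1 : ℝ)| * |(w.2 : ℝ)| + |(v.2 : ℝ)| * |(w.1 : ℝ)| := by rw [abs_mul, abs_mul]
      _ < ρ * ρ + ρ * ρ := by
          apply add_lt_add <;> apply mul_lt_mul'' <;> first | assumption | positivity
      _ ≤ N := by linarith
  exact_mod_cast h2

lemma prim_collinear (v w : ℤ × ℤ) (hv : Int.gcd v.1 v.2 = 1) (hw : Int.gcd w.1 w.2 = 1)
    (h : v.1 * w.2 - v.2 * w.1 = 0) : w = v ∨ w = -v := by
  obtain ⟨u, t, hb⟩ := Int.isCoprime_iff_gcd_eq_one.mpr hv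
  set k := u * w.1 + t * w.2 with hk
  have h1 : w.1 = k * v.1 := by rw [hk]; linear_combination (-w.1) * hb - t * h
  have h2 : w.2 = k * v.2 := by rw [hk]; linear_combination (-w.2) * hb + u * h
  rw [h1, h2, Int.gcd_mul_left, hv, mul_one] at hw
  rcases Int.natAbs_eq_iff.mp hw with h3 | h3
  · left; ext <;> simp [h1, h2, h3]
  · right; ext <;> simp [h1, h2, h3]

open Classical in
/-- primitive directions of short solutions -/
noncomputable def WW (N : ℕ) (ρ : ℝ) (r : ZMod N × ZMod N) : Finset (ℤ × ℤ) :=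
  (prim ρ).filter (fun v => v ∈ prim (ρ / (addOrderOf (dot N r v) : ℝ)))

lemma dot_smul (N : ℕ) (r : ZMod N × ZMod N) (k : ℤ) (v : ℤ × ℤ) :
    dot N r (k * v.1, k * v.2) = (k : ZMod N) * dot N r v := by
  unfold dot; push_cast; ring

lemma ord_pos (N : ℕ) [NeZero N] (x : ZMod N) : 0 < addOrderOf x := addOrderOf_pos x

lemma ord_mul (N : ℕ) (x : ZMod N) : ((addOrderOf x : ℤ) : ZMod N) * x = 0 := by
  have := addOrderOf_nsmul_eq_zero x
  rw [nsmul_eq_mul] at this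
  exact_mod_cast this

lemma mem_WW (N : ℕ) [NeZero N] (ρ : ℝ) (r : ZMod N × ZMod N) (v : ℤ × ℤ) :
    v ∈ WW N ρ r ↔ Int.gcd v.1 v.2 = 1 ∧ (addOrderOf (dot N r v) : ℝ) * |(v.1 : ℝ)| < ρ ∧
      (addOrderOf (dot N r v) : ℝ) * |(v.2 : ℝ)| < ρ := by
  have h1 : (1 : ℝ) ≤ addOrderOf (dot N r v) := by exact_mod_cast ord_pos N _
  have h0 : (0 : ℝ) < addOrderOf (dot N r v) := by linarith
  simp only [WW, Finset.mem_filter, mem_prim, lt_div_iff₀ h0]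
  rw [mul_comm |(v.1 : ℝ)|, mul_comm |(v.2 : ℝ)|]
  constructor
  · rintro ⟨_, ⟨h2, h3⟩, h4⟩
    exact ⟨h4, h2, h3⟩
  · rintro ⟨h4, h2, h3⟩
    refine ⟨⟨⟨?_, ?_⟩, h4⟩, ⟨h2, h3⟩, h4⟩
    · nlinarith [abs_nonneg (v.1 : ℝ)]
    · nlinarith [abs_nonneg (v.2 : ℝ)]

/-- existence of a non-trivial short solution -/
def Short (N : ℕ) (ρ : ℝ) (r : ZMod N × ZMod N) : Prop :=
  ∃ x y : ℤ, ¬((x : ZMod N) = 0 ∧ (y : ZMod N) = 0) ∧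
    r.1 * (x : ZMod N) + r.2 * (y : ZMod N) = 0 ∧ |(x : ℝ)| < ρ ∧ |(y : ℝ)| < ρ

lemma short_iff (N : ℕ) [NeZero N] (ρ : ℝ) (hρ : 2 * ρ ^ 2 ≤ N) (r : ZMod N × ZMod N) :
    Short N ρ r ↔ (WW N ρ r).Nonempty := by
  have hN : 0 < N := Nat.pos_of_ne_zero (NeZero.ne N)
  have hN1 : (1 : ℝ) ≤ N := by exact_mod_cast hN
  constructor
  · rintro ⟨x, y, h0, h1, hx, hy⟩
    have hne : Int.gcd x y ≠ 0 := by
      rw [Ne, Int.gcd_eq_zero_iff]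
      rintro ⟨rfl, rfl⟩
      simp at h0
    obtain ⟨x', y', hg, hx', hy'⟩ := Int.exists_gcd_one (Nat.pos_of_ne_zero hne)
    set g := Int.gcd x y with hgdef
    refine ⟨(x', y'), ?_⟩
    rw [mem_WW]
    have h2 : addOrderOf (dot N r (x', y')) ∣ g := by
      rw [addOrderOf_dvd_iff_nsmul_eq_zero, nsmul_eq_mul, ← h1, hx', hy']
      unfold dot; push_cast; ring
    have h3 : ((addOrderOf (dot N r (x', y')) : ℕ) : ℝ) ≤ g := by
      exact_mod_cast Nat.le_of_dvd (Nat.pos_of_ne_zero hne) h2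
    refine ⟨hg, ?_, ?_⟩
    · refine lt_of_le_of_lt (mul_le_mul_of_nonneg_right h3 (abs_nonneg _)) ?_
      rw [hx'] at hx; push_cast at hx
      rwa [abs_mul, Nat.abs_cast, mul_comm] at hx
    · refine lt_of_le_of_lt (mul_le_mul_of_nonneg_right h3 (abs_nonneg _)) ?_
      rw [hy'] at hy; push_cast at hy
      rwa [abs_mul, Nat.abs_cast, mul_comm] at hy
  · rintro ⟨v, hv⟩
    rw [mem_WW] at hv
    obtain ⟨hg, h1, h2⟩ := hv
    set d := addOrderOf (dot N r v) with hd
    have hd0 : 0 < d := ord_pos N _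
    have hx : |((d : ℤ) * v.1 : ℤ)| < ρ := by
      push_cast; rwa [abs_mul, Nat.abs_cast]
    have hy : |((d : ℤ) * v.2 : ℤ)| < ρ := by
      push_cast; rwa [abs_mul, Nat.abs_cast]
    have hρ0 : 0 ≤ ρ := (by positivity : (0:ℝ) ≤ |((d : ℤ) * v.2 : ℤ)|).trans hy.le
    have hρN : ρ ≤ N := by nlinarith
    refine ⟨d * v.1, d * v.2, ?_, ?_, by exact_mod_cast hx, by exact_mod_cast hy⟩
    · rintro ⟨ha, hb⟩
      rw [ZMod.intCast_zmod_eq_zero_iff_dvd] at ha hb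
      have ha' := Int.eq_zero_of_abs_lt_dvd ha (by exact_mod_cast hx.trans_le hρN)
      have hb' := Int.eq_zero_of_abs_lt_dvd hb (by exact_mod_cast hy.trans_le hρN)
      have e1 : v.1 = 0 := by
        rcases mul_eq_zero.mp ha' with h | h
        · omega
        · exact h
      have e2 : v.2 = 0 := by
        rcases mul_eq_zero.mp hb' with h | h
        · omega
        · exact h
      rw [e1, e2] at hg
      simp at hg
    · have := dot_smul N r d v
      rw [hd, ord_mul] at this
      exact this

lemma WW_card (N : ℕ) [NeZero N] (ρ : ℝ) (hρ : 2 * ρ ^ 2 ≤ N) (r : ZMod N × ZMod N)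
    (hr : IsCoprime r.1 r.2) (hne : (WW N ρ r).Nonempty) : (WW N ρ r).card = 2 := by
  obtain ⟨v, hv⟩ := hne
  have hset : WW N ρ r = {v, -v} := by
    ext w
    simp only [Finset.mem_insert, Finset.mem_singleton]
    rw [mem_WW] at hv
    constructor
    · intro hw
      rw [mem_WW] at hw
      obtain ⟨hg, h1, h2⟩ := hv
      obtain ⟨hg', h1', h2'⟩ := hw
      set d := addOrderOf (dot N r v) with hd
      set e := addOrderOf (dot N r w) with he
      have hd0 : 0 < d := ord_pos N _
      have he0 : 0 < e := ord_pos N _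
      have hz := det_zero N r hr (d * v.1, d * v.2) (e * w.1, e * w.2)
        (by rw [dot_smul, hd, ord_mul]) (by rw [dot_smul, he, ord_mul]) ρ hρ
        (by push_cast; rwa [abs_mul, Nat.abs_cast]) (by push_cast; rwa [abs_mul, Nat.abs_cast])
        (by push_cast; rwa [abs_mul, Nat.abs_cast]) (by push_cast; rwa [abs_mul, Nat.abs_cast])
      apply prim_collinear v w hg hg'
      have hz2 : ((d : ℤ) * e) * (v.1 * w.2 - v.2 * w.1) = 0 := by
        simp only at hz; linear_combination hz
      rcases mul_eq_zero.mp hz2 with h | h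
      · exfalso
        have : (0 : ℤ) < d * e := by positivity
        omega
      · exact h
    · rintro (rfl | rfl)
      · rw [mem_WW]; exact hv
      · rw [mem_WW]
        have : dot N r (-v) = - dot N r v := by unfold dot; simp; ring
        rw [this, addOrderOf_neg]
        simpa using hv
  rw [hset, Finset.card_pair]
  intro h
  rw [mem_WW] at hv
  have e1 : v.1 = -v.1 := congrArg Prod.fst h
  have e2 : v.2 = -v.2 := congrArg Prod.snd h
  have e1 : v.1 = 0 := by omega
  have e2 : v.2 = 0 := by omega
  rw [e1, e2] at hv
  simp at hv

open Classical in
lemma double_count (N : ℕ) [NeZero N] (ρ : ℝ) (hρ : 2 * ρ ^ 2 ≤ N) :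
    2 * ((GZ N).filter (fun r => Short N ρ r)).card = ∑ d ∈ N.divisors, (prim (ρ / d)).card * cc N d := by
  have hN : 0 < N := Nat.pos_of_ne_zero (NeZero.ne N)
  have hL : 2 * ((GZ N).filter (fun r => Short N ρ r)).card = ∑ r ∈ GZ N, (WW N ρ r).card := by
    rw [Finset.card_filter, Finset.mul_sum]
    apply Finset.sum_congr rfl
    intro r hr
    have hr' : IsCoprime r.1 r.2 := by simpa [GZ] using hr
    split_ifs with h
    · rw [WW_card N ρ hρ r hr' ((short_iff N ρ hρ r).mp h), mul_one]
    · rw [short_iff N ρ hρ r, Finset.not_nonempty_iff_eq_empty] at h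
      rw [h]; simp
  have hR : ∀ d ∈ N.divisors, (prim (ρ / d)).card * cc N d =
      ∑ r ∈ GZ N, ((prim (ρ / d)).filter (fun v => addOrderOf (dot N r v) = d)).card := by
    intro d _
    simp_rw [Finset.card_filter]
    rw [Finset.sum_comm]
    simp_rw [← Finset.card_filter]
    rw [Finset.sum_congr rfl (fun v hv => card_dot N d v ((mem_prim _ _).mp hv).2)]
    simp
  rw [hL, Finset.sum_congr rfl hR, Finset.sum_comm]
  apply Finset.sum_congr rfl
  intro r _
  rw [Finset.card_eq_sum_card_fiberwise (f := fun v => addOrderOf (dot N r v)) (t := N.divisors)]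
  · apply Finset.sum_congr rfl
    intro d hd
    congr 1
    ext v
    rw [Finset.mem_filter, Finset.mem_filter, mem_WW, mem_prim]
    have hd0 : (0 : ℝ) < d := by exact_mod_cast Nat.pos_of_mem_divisors hd
    rw [lt_div_iff₀ hd0, lt_div_iff₀ hd0]
    constructor
    · rintro ⟨⟨h1, h2, h3⟩, rfl⟩
      exact ⟨⟨⟨by rwa [mul_comm], by rwa [mul_comm]⟩, h1⟩, rfl⟩
    · rintro ⟨⟨⟨h1, h2⟩, h3⟩, rfl⟩
      exact ⟨⟨h3, by rwa [mul_comm], by rwa [mul_comm]⟩, rfl⟩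
  · intro v _
    simp only [Finset.mem_coe, Nat.mem_divisors]
    refine ⟨?_, NeZero.ne N⟩
    have := addOrderOf_dvd_card (x := dot N r v)
    rwa [ZMod.card] at this

noncomputable def gg (R : ℝ) : ℝ := ((prim R).card : ℝ) / (4 * R ^ 2)

lemma gg_bound {R : ℝ} (hR : 0 < R) : |gg R - 6 / Real.pi ^ 2| ≤ 2 + 6 / Real.pi ^ 2 := by
  have h1 : 0 ≤ gg R := by unfold gg; positivity
  have h2 : gg R ≤ 2 := by
    unfold gg
    rw [div_le_iff₀ (by positivity)]
    linarith [prim_le hR.le]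
  have h3 : 0 ≤ 6 / Real.pi ^ 2 := by positivity
  rw [abs_le]; constructor <;> linarith

lemma main_bound (N : ℕ) [NeZero N] (ρ R0 ε : ℝ) (hρ : 0 < ρ) (hR0 : 0 < R0) (hε : 0 ≤ ε)
    (h : ∀ R, R0 ≤ R → |gg R - 6 / Real.pi ^ 2| ≤ ε) :
    |(∑ d ∈ N.divisors, (cc N (N / d) : ℝ) * gg (ρ / d)) - 6 / Real.pi ^ 2 * (GZ N).card| ≤
      ε * (GZ N).card + (2 + 6 / Real.pi ^ 2) * N.divisors.card * ((N : ℝ) ^ 2 * R0 / ρ) := by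
  have hs : ((GZ N).card : ℝ) = ∑ d ∈ N.divisors, (cc N (N / d) : ℝ) := by
    rw [← cc_sum, ← Nat.sum_div_divisors N (fun d => cc N d)]
    push_cast; rfl
  have hK : 0 ≤ 2 + 6 / Real.pi ^ 2 := by positivity
  have key : ∀ d ∈ N.divisors, |(cc N (N / d) : ℝ) * gg (ρ / d) - 6 / Real.pi ^ 2 * (cc N (N / d) : ℝ)| ≤
      ε * (cc N (N / d) : ℝ) + (2 + 6 / Real.pi ^ 2) * ((N : ℝ) ^ 2 * R0 / ρ) := by
    intro d hd
    have hd0 : (0 : ℝ) < d := by exact_mod_cast Nat.pos_of_mem_divisors hd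
    have e : (cc N (N / d) : ℝ) * gg (ρ / d) - 6 / Real.pi ^ 2 * (cc N (N / d) : ℝ) =
      (cc N (N / d) : ℝ) * (gg (ρ / d) - 6 / Real.pi ^ 2) := by ring
    rw [e, abs_mul, Nat.abs_cast]
    have hc0 : (0 : ℝ) ≤ cc N (N / d) := by positivity
    rcases le_or_gt R0 (ρ / d) with h1 | h1
    · have h2 := mul_le_mul_of_nonneg_left (h _ h1) hc0
      have h3 : 0 ≤ (2 + 6 / Real.pi ^ 2) * ((N : ℝ) ^ 2 * R0 / ρ) := by positivity
      linarith
    · have h2 := mul_le_mul_of_nonneg_left (gg_bound (R := ρ / d) (by positivity)) hc0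
      have h3 : (d : ℝ) * cc N (N / d) ≤ (N : ℝ) ^ 2 := by
        exact_mod_cast cc_le N d (Nat.dvd_of_mem_divisors hd)
      have h4 : (cc N (N / d) : ℝ) ≤ (N : ℝ) ^ 2 * R0 / ρ := by
        rw [div_lt_iff₀ hd0] at h1
        rw [le_div_iff₀ hρ]
        nlinarith
      have h5 := mul_le_mul_of_nonneg_right h4 hK
      have h6 : 0 ≤ ε * (cc N (N / d) : ℝ) := by positivity
      linarith
  rw [hs, Finset.mul_sum, ← Finset.sum_sub_distrib]
  refine (Finset.abs_sum_le_sum_abs _ _).trans ((Finset.sum_le_sum key).trans_eq ?_)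
  rw [Finset.sum_add_distrib, ← Finset.mul_sum, Finset.sum_const, nsmul_eq_mul]
  ring

open Classical in
lemma count_formula (a : ℝ) (ha : 0 < a) (ha2 : a ≤ 2) (N : ℕ) [NeZero N] :
    2 * (((GZ N).filter (fun r => Short N (Real.sqrt (a * N) / 2) r)).card : ℝ) =
      a * ∑ d ∈ N.divisors, (cc N (N / d) : ℝ) * gg (Real.sqrt (a * N) / 2 / d) := by
  have hN : 0 < N := Nat.pos_of_ne_zero (NeZero.ne N)
  have hN' : (0 : ℝ) < N := by exact_mod_cast hN
  have hsq : Real.sqrt (a * N) ^ 2 = a * N := Real.sq_sqrt (by positivity)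
  have hsp : 0 < Real.sqrt (a * N) := Real.sqrt_pos.mpr (by positivity)
  have h := double_count N (Real.sqrt (a * N) / 2) (by rw [div_pow, hsq]; nlinarith)
  have h' : 2 * (((GZ N).filter (fun r => Short N (Real.sqrt (a * N) / 2) r)).card : ℝ) =
      ∑ d ∈ N.divisors, ((prim (Real.sqrt (a * N) / 2 / d)).card : ℝ) * (cc N d : ℝ) := by
    exact_mod_cast h
  rw [h', Finset.mul_sum]
  apply Finset.sum_congr rfl
  intro d hd
  have hd0 : (0 : ℝ) < d := by exact_mod_cast Nat.pos_of_mem_divisors hd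
  have hc : (N : ℝ) * cc N d = (d : ℝ) ^ 2 * cc N (N / d) := by
    exact_mod_cast cc_symm N d (Nat.dvd_of_mem_divisors hd)
  have hc2 : (cc N d : ℝ) = (d : ℝ) ^ 2 * cc N (N / d) / N := by
    rw [eq_div_iff hN'.ne']; linarith
  unfold gg
  rw [hc2, div_pow, div_pow, hsq]
  field_simp
  ring

open Classical in
lemma main_tendsto (a : ℝ) (ha : 0 < a) (f : ℕ → ℝ)
    (hf : ∀ (N : ℕ) [NeZero N], f N = (∑ d ∈ N.divisors, (cc N (N / d) : ℝ) * gg (Real.sqrt (a * N) / 2 / d)) / (GZ N).card) :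
    Tendsto f atTop (nhds (6 / Real.pi ^ 2)) := by
  rw [Metric.tendsto_atTop']
  intro ε hε
  have hg := (Metric.tendsto_atTop.mp (show Tendsto gg atTop (nhds (6 / Real.pi ^ 2)) from prim_tendsto)) (ε / 2) (by positivity)
  obtain ⟨R1, hR1⟩ := hg
  set R0 := max R1 1 with hR0
  have hR0p : 0 < R0 := lt_of_lt_of_le one_pos (le_max_right _ _)
  have hgg : ∀ R, R0 ≤ R → |gg R - 6 / Real.pi ^ 2| ≤ ε / 2 := by
    intro R hR
    have := hR1 R ((le_max_left _ _).trans hR)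
    rw [Real.dist_eq] at this
    exact this.le
  set K := 2 + 6 / Real.pi ^ 2 with hK
  have hKp : 0 < K := by positivity
  have ht := tau_tendsto.const_mul (8 * K * R0 / Real.sqrt a)
  rw [mul_zero] at ht
  obtain ⟨n0, hn0⟩ := (Metric.tendsto_atTop.mp ht) (ε / 2) (by positivity)
  refine ⟨n0, fun N hN => ?_⟩
  have hNpos : 0 < N := by omega
  have : NeZero N := ⟨hNpos.ne'⟩
  have hN' : (0 : ℝ) < N := by exact_mod_cast hNpos
  have h1 := hn0 N hN.le
  rw [Real.dist_eq, sub_zero] at h1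
  replace h1 := (abs_lt.mp h1).2
  have hsp : 0 < Real.sqrt (a * N) := Real.sqrt_pos.mpr (by positivity)
  have h2 := main_bound N (Real.sqrt (a * N) / 2) R0 (ε / 2) (by positivity) hR0p (by positivity) hgg
  have hlow := GZ_lower N
  have hGp : (0 : ℝ) < (GZ N).card := lt_of_lt_of_le (by positivity) hlow
  rw [hf N, Real.dist_eq, div_sub' hGp.ne', abs_div, Nat.abs_cast, div_lt_iff₀ hGp, mul_comm ((GZ N).card : ℝ)]
  refine lt_of_le_of_lt h2 ?_
  have hsa : 0 < Real.sqrt a := Real.sqrt_pos.mpr ha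
  have hsN : 0 < Real.sqrt N := Real.sqrt_pos.mpr hN'
  have e : (2 + 6 / Real.pi ^ 2) * N.divisors.card * ((N : ℝ) ^ 2 * R0 / (Real.sqrt (a * N) / 2)) =
      (8 * K * R0 / Real.sqrt a * ((N.divisors.card : ℝ) / Real.sqrt N)) * ((N : ℝ) ^ 2 / 4) := by
    rw [Real.sqrt_mul ha.le, ← hK]
    field_simp
    ring
  rw [e]
  have h3 : (8 * K * R0 / Real.sqrt a * ((N.divisors.card : ℝ) / Real.sqrt N)) * ((N : ℝ) ^ 2 / 4) <
      ε / 2 * ((N : ℝ) ^ 2 / 4) := mul_lt_mul_of_pos_right h1 (by positivity)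
  have h4 : ε / 2 * ((N : ℝ) ^ 2 / 4) ≤ ε / 2 * (GZ N).card := mul_le_mul_of_nonneg_left hlow (by positivity)
  linarith

/-- For `0 < a ≤ 2`, the proportion of pairs `(r₁,r₂) ∈ {0,…,N−1}²` with
`gcd(r₁,r₂,N) = 1` such that `r₁x + r₂y ≡ 0 (mod N)` has a non-trivial solution in the
box `B_N(a) = (−√(aN)/2, √(aN)/2)²` tends to `3a/π²` as `N → ∞`. -/
theorem prob_nontrivial_short_solution (a : ℝ) (ha : 0 < a) (ha2 : a ≤ 2) :
    Tendsto (fun N : ℕ =>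
      (Set.ncard {p : ℕ × ℕ | p.1 < N ∧ p.2 < N ∧ Nat.gcd (Nat.gcd p.1 p.2) N = 1 ∧
          ∃ x y : ℤ, ¬((x : ZMod N) = 0 ∧ (y : ZMod N) = 0) ∧
            (p.1 : ZMod N) * (x : ZMod N) + (p.2 : ZMod N) * (y : ZMod N) = 0 ∧
            (|x| : ℝ) < Real.sqrt (a * N) / 2 ∧ (|y| : ℝ) < Real.sqrt (a * N) / 2} : ℝ) /
        (Set.ncard {p : ℕ × ℕ |
          p.1 < N ∧ p.2 < N ∧ Nat.gcd (Nat.gcd p.1 p.2) N = 1} : ℝ))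
      atTop (nhds (3 * a / Real.pi ^ 2)) := by
  classical
  set F : ℕ → ℝ := fun N => if h : N = 0 then 0 else
    (haveI : NeZero N := ⟨h⟩
    (∑ d ∈ N.divisors, (cc N (N / d) : ℝ) * gg (Real.sqrt (a * N) / 2 / d)) / (GZ N).card) with hF
  have hlim := (main_tendsto a ha F (by
    intro N inst
    rw [hF]
    simp only [NeZero.ne N, dite_false])).const_mul (a / 2)
  rw [show a / 2 * (6 / Real.pi ^ 2) = 3 * a / Real.pi ^ 2 by ring] at hlim
  refine hlim.congr' ?_
  filter_upwards [eventually_gt_atTop 0] with N hN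
  have : NeZero N := ⟨hN.ne'⟩
  rw [transfer_set N (fun r => IsCoprime r.1 r.2 ∧ Short N (Real.sqrt (a * N) / 2) r) _
      (fun p => by simp only [Set.mem_ofPred_eq, gcd_iff, Short]),
    transfer_set N (fun r => IsCoprime r.1 r.2) _
      (fun p => by simp only [Set.mem_ofPred_eq, gcd_iff])]
  have h1 := count_formula a ha ha2 N
  have h2 : (GZ N).filter (fun r => Short N (Real.sqrt (a * N) / 2) r) =
      Finset.univ.filter (fun r : ZMod N × ZMod N => IsCoprime r.1 r.2 ∧ Short N (Real.sqrt (a * N) / 2) r) := by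
    unfold GZ; rw [Finset.filter_filter]
  rw [h2] at h1
  have h3 : GZ N = Finset.univ.filter (fun r : ZMod N × ZMod N => IsCoprime r.1 r.2) := rfl
  rw [← h3, hF]
  simp only [hN.ne', dite_false]
  rw [← mul_div_assoc]
  congr 1
  linarith
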